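/- For every integer t with 1 ≤ t ≤ 55 there exists a linear code over the field with 64 elements of length 171, dimension 2t, minimum distance at least 171 − 3t − 3 = 168 − 3t, and locality 2. In particular (t = 51), there exists a linear code over the field with 64 elements of length 171, dimension 102, minimum distance at least 13, and locality 2. -/

import Mathlib

/-!
Codewords are the values of the functions `f - z g` with `f, g ∈ L(t O)` at rational points of the
Kummer cover `z ^ m = y / x` of `y ^ 2 + y = x ^ 3 + 1`. The norm `x f ^ m - y g ^ m` has a pole of
order at most `m t + 3` at `O`, and it is nonzero because its two terms have pole orders that differ
modulo `m`. It vanishes at each base point at least to the order of the number of zeros of `f - z g`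
above that point, so it lies in a product of as many maximal ideals of the coordinate ring `A` as
`f - z g` has zeros. A product of `d` proper ideals sits at the end of a strict chain of length `d`,
hence `d ≤ dim A / (G)` for every nonzero `G` in it, and this dimension is the pole order of `G`.
This bounds the number of zeros by `m t + 3`, which gives the dimension and the distance. On a fibre
of the cover a codeword is an affine function of `z`, so that two values determine all the others:
this is locality `2`. The points are counted on the birational model `s ^ (3 m) = v ^ 3 + 1`, a
quotient of the Hermitian curve, where the count is that of solutions of power equations.
-/

open Polynomial Module

section IdealProducts

variable {F A ι : Type*} [Field F] [CommRing A] [Algebra F A]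

theorem mul_ideal_lt_self [IsDomain A] [IsNoetherianRing A] {I J : Ideal A} (hI : I ≠ ⊤)
    (hJ : J ≠ ⊥) : I * J < J := by
  refine lt_of_le_of_ne Ideal.mul_le_right fun h => hI ?_
  obtain ⟨r, hrI, hr⟩ := Submodule.exists_mem_and_smul_eq_self_of_fg_of_le_smul I J
    (IsNoetherian.noetherian J) h.ge
  obtain ⟨x, hxJ, hx⟩ := J.exists_mem_ne_zero_of_ne_bot hJ
  have hr1 : r = 1 := mul_right_cancel₀ hx ((hr x hxJ).trans (one_mul x).symm)
  exact (Ideal.eq_top_iff_one I).mpr (hr1 ▸ hrI)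

theorem finrank_quotient_lt_of_lt {I J : Ideal A} (h : I < J) [Module.Finite F (A ⧸ I)] :
    finrank F (A ⧸ J) < finrank F (A ⧸ I) := by
  let π : (A ⧸ I) →ₐ[F] A ⧸ J := Ideal.Quotient.factorₐ F h.le
  have hπ : Function.Surjective π := Ideal.Quotient.factor_surjective h.le
  obtain ⟨x, hxJ, hxI⟩ := Set.exists_of_ssubset h
  have hker : 0 < finrank F π.toLinearMap.ker := by
    rw [finrank_pos_iff_exists_ne_zero]
    refine ⟨⟨Ideal.Quotient.mk I x, ?_⟩, fun h0 => hxI ?_⟩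
    · exact Ideal.Quotient.eq_zero_iff_mem.mpr hxJ
    · exact Ideal.Quotient.eq_zero_iff_mem.mp (congrArg Subtype.val h0)
  have hrank := π.toLinearMap.finrank_range_add_finrank_ker
  rw [LinearMap.range_eq_top.mpr hπ, finrank_top] at hrank
  omega

theorem finite_quotient_of_le {I J : Ideal A} (h : I ≤ J) [Module.Finite F (A ⧸ I)] :
    Module.Finite F (A ⧸ J) :=
  Module.Finite.of_surjective (Ideal.Quotient.factorₐ F h).toLinearMap
    (Ideal.Quotient.factor_surjective h)

theorem card_le_finrank_quotient_prod [IsDomain A] [IsNoetherianRing A] (T : Finset ι)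
    (I : ι → Ideal A) (hI : ∀ i ∈ T, I i ≠ ⊤) (h0 : ∏ i ∈ T, I i ≠ ⊥)
    (hfin : Module.Finite F (A ⧸ ∏ i ∈ T, I i)) :
    T.card ≤ finrank F (A ⧸ ∏ i ∈ T, I i) := by
  classical
  induction T using Finset.induction_on with
  | empty => simp
  | insert j T hj ih =>
    have hlt : ∏ i ∈ insert j T, I i < ∏ i ∈ T, I i := by
      rw [Finset.prod_insert hj] at h0 ⊢
      exact mul_ideal_lt_self (hI j (Finset.mem_insert_self j T)) (right_ne_zero_of_mul h0)
    rw [Finset.card_insert_of_notMem hj]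
    exact (ih (fun i hi => hI i (Finset.mem_insert_of_mem hi)) (ne_bot_of_gt hlt)
      (finite_quotient_of_le hlt.le)).trans_lt (finrank_quotient_lt_of_lt hlt)

theorem isCoprime_ker_of_ne {φ ψ : A →ₐ[F] F} (h : φ ≠ ψ) :
    IsCoprime (RingHom.ker φ) (RingHom.ker ψ) := by
  obtain ⟨f, hf⟩ := DFunLike.exists_ne h
  have hc : φ f - ψ f ≠ 0 := sub_ne_zero.mpr hf
  rw [Ideal.isCoprime_iff_exists]
  refine ⟨(φ f - ψ f)⁻¹ • (algebraMap F A (φ f) - f), ?_,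
    (φ f - ψ f)⁻¹ • (f - algebraMap F A (ψ f)), ?_, ?_⟩
  · simp
  · simp
  · rw [← smul_add, sub_add_sub_cancel, ← map_sub, Algebra.algebraMap_eq_smul_one, smul_smul,
      inv_mul_cancel₀ hc, one_smul]

theorem mem_prod_ker [DecidableEq (A →ₐ[F] F)] (T : Finset ι) (φ : ι → A →ₐ[F] F) {G : A}
    (hG : ∀ i ∈ T, G ∈ RingHom.ker (φ i) ^ (T.filter fun j => φ j = φ i).card) :
    G ∈ ∏ i ∈ T, RingHom.ker (φ i) := by
  rw [Finset.prod_comp (fun ψ : A →ₐ[F] F => RingHom.ker ψ) φ,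
    Ideal.prod_eq_iInf_of_pairwise_isCoprime fun _ _ _ _ h => (isCoprime_ker_of_ne h).pow]
  simpa using hG

theorem card_le_finrank_quotient_of_mem_prod_ker [IsDomain A] [IsNoetherianRing A] (T : Finset ι)
    (φ : ι → A →ₐ[F] F) {G : A} (hG : G ≠ 0) [Module.Finite F (A ⧸ Ideal.span {G})]
    (h : G ∈ ∏ i ∈ T, RingHom.ker (φ i)) : T.card ≤ finrank F (A ⧸ Ideal.span {G}) := by
  have hle : Ideal.span {G} ≤ ∏ i ∈ T, RingHom.ker (φ i) :=
    (Ideal.span_singleton_le_iff_mem _).mpr h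
  refine (card_le_finrank_quotient_prod (F := F) T (fun i => RingHom.ker (φ i))
    (fun i _ => RingHom.ker_ne_top (φ i)) ?_ (finite_quotient_of_le hle)).trans ?_
  · exact (Submodule.ne_bot_iff _).mpr ⟨G, h, hG⟩
  · exact LinearMap.finrank_le_finrank_of_surjective
      (f := (Ideal.Quotient.factorₐ F hle).toLinearMap) (Ideal.Quotient.factor_surjective hle)

end IdealProducts

section Kummer

/-- An `F`-rational point of the Kummer cover `z ^ m * a = b` of `Spec A`, away from the zeros of
`a`: a rational point of `Spec A` together with a value of `z` above it. -/
@[ext]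
structure KummerPoint (F : Type*) {A : Type*} [Field F] [CommRing A] [Algebra F A] (m : ℕ)
    (a b : A) where
  /-- The image of the point in `Spec A`. -/
  base : A →ₐ[F] F
  /-- The value of the Kummer generator `z`. -/
  root : F
  base_ne_zero : base a ≠ 0
  root_pow_mul : root ^ m * base a = base b

namespace KummerPoint

variable {F A : Type*} [Field F] [CommRing A] [Algebra F A] {m : ℕ} {a b : A}

theorem card_le_of_base_eq (hm : 0 < m) (T : Finset (KummerPoint F m a b)) {φ : A →ₐ[F] F}
    (h : ∀ P ∈ T, P.base = φ) : T.card ≤ m := by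
  classical
  refine (Finset.card_le_card_of_injOn root (t := (nthRoots m (φ b / φ a)).toFinset) ?_ ?_).trans
    ((Multiset.toFinset_card_le _).trans (card_nthRoots m _))
  · intro P hP
    have hP' := h P hP
    subst hP'
    rw [Finset.mem_coe, Multiset.mem_toFinset, mem_nthRoots hm]
    exact (eq_div_iff P.base_ne_zero).mpr P.root_pow_mul
  · exact fun P hP Q hQ hPQ => KummerPoint.ext ((h P hP).trans (h Q hQ).symm) hPQ

theorem kummer_norm_mem_ker (P : KummerPoint F m a b) {f g : A}
    (h : P.base f = P.root * P.base g) : a * f ^ m - b * g ^ m ∈ RingHom.ker P.base := by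
  rw [RingHom.mem_ker, map_sub, map_mul, map_mul, map_pow, map_pow, h, ← P.root_pow_mul]
  ring

theorem kummer_norm_mem_ker_pow {φ : A →ₐ[F] F} {f g : A} (hf : φ f = 0) (hg : φ g = 0) :
    a * f ^ m - b * g ^ m ∈ RingHom.ker φ ^ m :=
  sub_mem (Ideal.mul_mem_left _ _ (Ideal.pow_mem_pow hf m))
    (Ideal.mul_mem_left _ _ (Ideal.pow_mem_pow hg m))

/-- A zero of `f - z g` in a fibre of the cover determines `z`, unless `f` and `g` both vanish. -/
theorem kummer_norm_mem_prod_ker (hm : 0 < m) (T : Finset (KummerPoint F m a b)) {f g : A}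
    (h : ∀ P ∈ T, P.base f = P.root * P.base g) :
    a * f ^ m - b * g ^ m ∈ ∏ P ∈ T, RingHom.ker P.base := by
  classical
  refine mem_prod_ker T base fun P hP => ?_
  by_cases hg : P.base g = 0
  · have hf : P.base f = 0 := by rw [h P hP, hg, mul_zero]
    refine Ideal.pow_le_pow_right (card_le_of_base_eq hm _ (φ := P.base) ?_)
      (kummer_norm_mem_ker_pow hf hg)
    exact fun Q hQ => (Finset.mem_filter.mp hQ).2
  · have hfib : (T.filter fun Q => Q.base = P.base).card ≤ 1 := by
      refine Finset.card_le_one.mpr fun Q hQ R hR => ?_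
      obtain ⟨hQT, hQP⟩ := Finset.mem_filter.mp hQ
      obtain ⟨hRT, hRP⟩ := Finset.mem_filter.mp hR
      have hQR : Q.root * P.base g = R.root * P.base g := by
        rw [← hQP, ← h Q hQT, hQP, ← hRP, ← h R hRT]
      exact KummerPoint.ext (hQP.trans hRP.symm) (mul_right_cancel₀ hg hQR)
    refine Ideal.pow_le_pow_right hfib ?_
    rw [pow_one]
    exact kummer_norm_mem_ker P (h P hP)

theorem card_zeros_le [IsDomain A] [IsNoetherianRing A] (hm : 0 < m)
    (T : Finset (KummerPoint F m a b)) {f g : A} (hG : a * f ^ m - b * g ^ m ≠ 0)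
    [Module.Finite F (A ⧸ Ideal.span {a * f ^ m - b * g ^ m})]
    (h : ∀ P ∈ T, P.base f = P.root * P.base g) :
    T.card ≤ finrank F (A ⧸ Ideal.span {a * f ^ m - b * g ^ m}) :=
  card_le_finrank_quotient_of_mem_prod_ker T base hG (kummer_norm_mem_prod_ker hm T h)

variable {ι : Type*}

/-- The evaluation map `(f, g) ↦ f - z g` at a family of points of the Kummer cover, for `f` and `g`
in an `F`-subspace `L` of `A`; its range is the code of the construction. -/
def evalMap (p : ι → KummerPoint F m a b) (L : Submodule F A) : L × L →ₗ[F] ι → F :=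
  LinearMap.pi fun i =>
    (((p i).base.toLinearMap.comp L.subtype).comp (LinearMap.fst F L L)) -
      (p i).root • (((p i).base.toLinearMap.comp L.subtype).comp (LinearMap.snd F L L))

theorem evalMap_apply (p : ι → KummerPoint F m a b) (L : Submodule F A) (v : L × L) (i : ι) :
    evalMap p L v i = (p i).base v.1 - (p i).root * (p i).base v.2 :=
  rfl

/-- On a fibre of the cover a codeword is an affine function of `z`. -/
theorem eq_of_mem_range_evalMap {p : ι → KummerPoint F m a b} {L : Submodule F A} {i j k : ι}
    (hj : (p j).base = (p i).base) (hk : (p k).base = (p i).base)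
    (hjk : (p j).root ≠ (p k).root) {x y : ι → F} (hx : x ∈ LinearMap.range (evalMap p L))
    (hy : y ∈ LinearMap.range (evalMap p L)) (hxyj : x j = y j) (hxyk : x k = y k) :
    x i = y i := by
  obtain ⟨v, rfl⟩ := hx
  obtain ⟨w, rfl⟩ := hy
  simp only [evalMap_apply, hj, hk] at hxyj hxyk ⊢
  have hsnd : (p i).base v.2 = (p i).base w.2 :=
    mul_left_cancel₀ (sub_ne_zero.mpr hjk) (by linear_combination hxyk - hxyj)
  have hfst : (p i).base v.1 = (p i).base w.1 := by
    rw [hsnd] at hxyj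
    exact sub_left_injective hxyj
  rw [hfst, hsnd]

end KummerPoint

end Kummer

section Weierstrass

open WeierstrassCurve Affine.CoordinateRing

variable {F : Type*} [Field F] {W : Affine F}

/-- The order of the pole at infinity of a regular function on an affine Weierstrass curve, with
junk value `0` at the zero function. -/
noncomputable def poleOrder (f : W.CoordinateRing) : ℕ :=
  (Algebra.norm F[X] f).natDegree

theorem poleOrder_zero : poleOrder (0 : W.CoordinateRing) = 0 := by
  rw [poleOrder, (Algebra.norm_eq_zero_iff_of_basis (Affine.CoordinateRing.basis W)).mpr rfl,
    natDegree_zero]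

theorem norm_ne_zero_of_ne_zero {f : W.CoordinateRing} (hf : f ≠ 0) : Algebra.norm F[X] f ≠ 0 :=
  (Algebra.norm_ne_zero_iff_of_basis (Affine.CoordinateRing.basis W)).mpr hf

theorem ne_zero_of_poleOrder_pos {f : W.CoordinateRing} (h : 0 < poleOrder f) : f ≠ 0 := by
  rintro rfl
  exact h.ne' poleOrder_zero

theorem poleOrder_mul {f g : W.CoordinateRing} (hf : f ≠ 0) (hg : g ≠ 0) :
    poleOrder (f * g) = poleOrder f + poleOrder g := by
  rw [poleOrder, map_mul, natDegree_mul (norm_ne_zero_of_ne_zero hf) (norm_ne_zero_of_ne_zero hg),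
    poleOrder, poleOrder]

theorem poleOrder_mul_le (f g : W.CoordinateRing) :
    poleOrder (f * g) ≤ poleOrder f + poleOrder g := by
  rw [poleOrder, map_mul]
  exact natDegree_mul_le

theorem poleOrder_pow (f : W.CoordinateRing) (n : ℕ) : poleOrder (f ^ n) = n * poleOrder f := by
  rw [poleOrder, map_pow, natDegree_pow, poleOrder]

theorem finrank_quotient_span_singleton {f : W.CoordinateRing} (hf : f ≠ 0) :
    finrank F (W.CoordinateRing ⧸ Ideal.span {f}) = poleOrder f :=
  finrank_quotient_span_eq_natDegree_norm (Affine.CoordinateRing.basis W) hf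

theorem finite_quotient_span_singleton {f : W.CoordinateRing} (hf : 0 < poleOrder f) :
    Module.Finite F (W.CoordinateRing ⧸ Ideal.span {f}) :=
  Module.finite_of_finrank_pos
    (hf.trans_eq (finrank_quotient_span_singleton (ne_zero_of_poleOrder_pos hf)).symm)

theorem poleOrder_smul_basis_le_iff {p q : F[X]} {n : ℕ} :
    poleOrder (p • (1 : W.CoordinateRing) + q • mk W X) ≤ n ↔
      p ∈ degreeLT F (n / 2 + 1) ∧ q ∈ degreeLT F ((n - 1) / 2) := by
  rw [poleOrder, natDegree_le_iff_degree_le, degree_norm_smul_basis, max_le_iff, mem_degreeLT,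
    mem_degreeLT]
  refine and_congr ?_ ?_
  · rcases eq_or_ne p 0 with rfl | hp
    · simp
    · rw [degree_eq_natDegree hp, two_nsmul]
      norm_cast
      omega
  · rcases eq_or_ne q 0 with rfl | hq
    · simp
    · rw [degree_eq_natDegree hq, two_nsmul]
      norm_cast
      omega

variable (W) in
/-- The map `(p, q) ↦ p(x) + q(x) y` on polynomials of bounded degrees. -/
noncomputable def smulBasisMap (k l : ℕ) : degreeLT F k × degreeLT F l →ₗ[F] W.CoordinateRing :=
  (((LinearMap.toSpanSingleton F[X] W.CoordinateRing 1).restrictScalars F).comp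
    (degreeLT F k).subtype).coprod
  (((LinearMap.toSpanSingleton F[X] W.CoordinateRing (mk W X)).restrictScalars F).comp
    (degreeLT F l).subtype)

theorem smulBasisMap_apply {k l : ℕ} (v : degreeLT F k × degreeLT F l) :
    smulBasisMap W k l v = (v.1 : F[X]) • (1 : W.CoordinateRing) + (v.2 : F[X]) • mk W X :=
  rfl

theorem smulBasisMap_injective (k l : ℕ) : Function.Injective (smulBasisMap W k l) := by
  refine (injective_iff_map_eq_zero _).mpr fun v hv => ?_
  obtain ⟨h1, h2⟩ := smul_basis_eq_zero ((smulBasisMap_apply v).symm.trans hv)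
  exact Prod.ext (Subtype.ext h1) (Subtype.ext h2)

variable (W) in
/-- The Riemann–Roch space `L(n O)`, where `O` is the point at infinity, given by its basis of the
`x ^ i` with `2 i ≤ n` and the `x ^ i y` with `2 i + 3 ≤ n`. -/
noncomputable def riemannRochSpace (n : ℕ) : Submodule F W.CoordinateRing :=
  LinearMap.range (smulBasisMap W (n / 2 + 1) ((n - 1) / 2))

theorem mem_riemannRochSpace {n : ℕ} {f : W.CoordinateRing} :
    f ∈ riemannRochSpace W n ↔ poleOrder f ≤ n := by
  constructor
  · rintro ⟨v, rfl⟩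
    exact poleOrder_smul_basis_le_iff.mpr ⟨v.1.2, v.2.2⟩
  · intro h
    obtain ⟨p, q, rfl⟩ := exists_smul_basis_eq f
    obtain ⟨hp, hq⟩ := poleOrder_smul_basis_le_iff.mp h
    exact ⟨(⟨p, hp⟩, ⟨q, hq⟩), rfl⟩

instance finite_riemannRochSpace (n : ℕ) : Module.Finite F (riemannRochSpace W n) :=
  have (k : ℕ) : Module.Finite F (degreeLT F k) := .equiv (degreeLTEquiv F k).symm
  Module.Finite.range _

theorem finrank_riemannRochSpace {n : ℕ} (hn : 1 ≤ n) : finrank F (riemannRochSpace W n) = n := by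
  have hfin (k : ℕ) : Module.Finite F (degreeLT F k) := .equiv (degreeLTEquiv F k).symm
  have hrank (k : ℕ) : finrank F (degreeLT F k) = k := by
    rw [(degreeLTEquiv F k).finrank_eq, finrank_fin_fun]
  rw [riemannRochSpace, LinearMap.finrank_range_of_inj (smulBasisMap_injective _ _), finrank_prod,
    hrank, hrank]
  omega

theorem poleOrder_add_le (f g : W.CoordinateRing) :
    poleOrder (f + g) ≤ max (poleOrder f) (poleOrder g) :=
  mem_riemannRochSpace.mp (add_mem (mem_riemannRochSpace.mpr (le_max_left _ _))
    (mem_riemannRochSpace.mpr (le_max_right _ _)))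

theorem poleOrder_sub_le (f g : W.CoordinateRing) :
    poleOrder (f - g) ≤ max (poleOrder f) (poleOrder g) :=
  mem_riemannRochSpace.mp (sub_mem (mem_riemannRochSpace.mpr (le_max_left _ _))
    (mem_riemannRochSpace.mpr (le_max_right _ _)))

theorem poleOrder_sub_pos {f g : W.CoordinateRing} (h : poleOrder f ≠ poleOrder g) :
    0 < poleOrder (f - g) := by
  have hf := poleOrder_add_le (f - g) g
  have hg := poleOrder_sub_le f (f - g)
  rw [sub_add_cancel] at hf
  rw [sub_sub_cancel] at hg
  omega

theorem poleOrder_algebraMap_X : poleOrder (algebraMap F[X] W.CoordinateRing X) = 2 := by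
  have h : Algebra.norm F[X] (algebraMap F[X] W.CoordinateRing X) = X ^ 2 := by
    rw [Algebra.norm_algebraMap_of_basis (Affine.CoordinateRing.basis W), Fintype.card_fin]
  rw [poleOrder, h, natDegree_X_pow]

theorem poleOrder_mk_X : poleOrder (mk W X) = 3 := by
  have h := degree_norm_smul_basis (W' := W) 0 1
  rw [zero_smul, one_smul, zero_add] at h
  exact natDegree_eq_of_degree_eq_some (by simpa using h)

section KummerNorm

variable {m n : ℕ} {a b f g : W.CoordinateRing}

theorem poleOrder_mul_pow_le (hf : poleOrder f ≤ n) :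
    poleOrder (a * f ^ m) ≤ m * n + poleOrder a := by
  refine (poleOrder_mul_le _ _).trans ?_
  rw [poleOrder_pow, add_comm]
  gcongr

theorem poleOrder_kummer_norm_le (hf : poleOrder f ≤ n) (hg : poleOrder g ≤ n) :
    poleOrder (a * f ^ m - b * g ^ m) ≤ m * n + max (poleOrder a) (poleOrder b) := by
  refine (poleOrder_sub_le _ _).trans ?_
  rw [← max_add_add_left]
  exact max_le_max (poleOrder_mul_pow_le hf) (poleOrder_mul_pow_le hg)

theorem poleOrder_mul_pow_modEq (ha : a ≠ 0) (hf : f ≠ 0) :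
    poleOrder (a * f ^ m) ≡ poleOrder a [MOD m] := by
  rw [poleOrder_mul ha (pow_ne_zero m hf), poleOrder_pow]
  simp [Nat.ModEq]

theorem poleOrder_mul_pow_pos (ha : 0 < poleOrder a) (hf : f ≠ 0) : 0 < poleOrder (a * f ^ m) := by
  rw [poleOrder_mul (ne_zero_of_poleOrder_pos ha) (pow_ne_zero m hf)]
  omega

theorem poleOrder_kummer_norm_pos (hm : m ≠ 0) (ha : 0 < poleOrder a) (hb : 0 < poleOrder b)
    (hab : ¬ poleOrder a ≡ poleOrder b [MOD m]) (hfg : (f, g) ≠ 0) :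
    0 < poleOrder (a * f ^ m - b * g ^ m) := by
  refine poleOrder_sub_pos fun h => ?_
  by_cases hf : f = 0 <;> by_cases hg : g = 0
  · exact hfg (by rw [hf, hg, Prod.mk_zero_zero])
  · rw [hf, zero_pow hm, mul_zero, poleOrder_zero] at h
    exact (poleOrder_mul_pow_pos hb hg).ne h
  · rw [hg, zero_pow hm, mul_zero, poleOrder_zero] at h
    exact (poleOrder_mul_pow_pos ha hf).ne' h
  · have ha' := poleOrder_mul_pow_modEq (m := m) (ne_zero_of_poleOrder_pos ha) hf
    have hb' := poleOrder_mul_pow_modEq (m := m) (ne_zero_of_poleOrder_pos hb) hg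
    exact hab (ha'.symm.trans (h ▸ hb'))

end KummerNorm

end Weierstrass

section Codes

variable {F V ι : Type*} [Field F] [AddCommGroup V] [Module F V]

/-- A linear code has locality `r` if every coordinate of a codeword is determined by at most `r`
other coordinates. -/
def HasLocality (C : Submodule F (ι → F)) (r : ℕ) : Prop :=
  ∀ i, ∃ I : Finset ι, i ∉ I ∧ I.card ≤ r ∧
    ∀ x ∈ C, ∀ y ∈ C, (∀ j ∈ I, x j = y j) → x i = y i

theorem injective_of_card_zeros_lt [Finite ι] {E : V →ₗ[F] ι → F}
    (h : ∀ v ≠ 0, Nat.card {i // E v i = 0} < Nat.card ι) : Function.Injective E := by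
  refine (injective_iff_map_eq_zero E).mpr fun v hv => by_contra fun hv0 => (h v hv0).ne ?_
  exact Nat.card_congr (Equiv.subtypeUnivEquiv fun i => congrFun hv i)

theorem card_sub_le_weight_of_card_zeros_le [Finite ι] {E : V →ₗ[F] ι → F} {d : ℕ}
    (h : ∀ v ≠ 0, Nat.card {i // E v i = 0} ≤ d) {x : ι → F} (hx : x ∈ LinearMap.range E)
    (hx0 : x ≠ 0) : Nat.card ι - d ≤ Nat.card {i // x i ≠ 0} := by
  obtain ⟨v, rfl⟩ := hx
  have hv : v ≠ 0 := by
    rintro rfl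
    exact hx0 (map_zero E)
  have hsum : Nat.card ι = Nat.card {i // E v i = 0} + Nat.card {i // E v i ≠ 0} := by
    classical
    rw [← Nat.card_sum, Nat.card_congr (Equiv.sumCompl fun i => E v i = 0)]
  have := h v hv
  omega

namespace KummerPoint

open WeierstrassCurve

theorem hasLocality_range_evalMap {A : Type*} [CommRing A] [Algebra F A] {m : ℕ} {a b : A}
    (p : ι ↪ KummerPoint F m a b) (L : Submodule F A)
    (hfib : ∀ i, ∃ j k, j ≠ i ∧ k ≠ i ∧ j ≠ k ∧ (p j).base = (p i).base ∧
      (p k).base = (p i).base) :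
    HasLocality (LinearMap.range (evalMap p L)) 2 := by
  classical
  intro i
  obtain ⟨j, k, hji, hki, hjk, hj, hk⟩ := hfib i
  refine ⟨{j, k}, ?_, Finset.card_le_two, fun x hx y hy hxy => ?_⟩
  · rw [Finset.mem_insert, Finset.mem_singleton]
    exact not_or.mpr ⟨hji.symm, hki.symm⟩
  · have hroot : (p j).root ≠ (p k).root := fun h =>
      hjk (p.injective (KummerPoint.ext (hj.trans hk.symm) h))
    exact eq_of_mem_range_evalMap hj hk hroot hx hy (hxy j (Finset.mem_insert_self j {k}))
      (hxy k (Finset.mem_insert_of_mem (Finset.mem_singleton_self k)))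

variable [Finite ι] {W : Affine F} {m : ℕ} {a b : W.CoordinateRing}

theorem card_zeros_evalMap_le (p : ι ↪ KummerPoint F m a b) (hm : m ≠ 0) (ha : 0 < poleOrder a)
    (hb : 0 < poleOrder b) (hab : ¬ poleOrder a ≡ poleOrder b [MOD m]) (n : ℕ)
    (v : riemannRochSpace W n × riemannRochSpace W n) (hv : v ≠ 0) :
    Nat.card {i // evalMap p (riemannRochSpace W n) v i = 0} ≤
      m * n + max (poleOrder a) (poleOrder b) := by
  classical
  have := Fintype.ofFinite ι
  obtain ⟨⟨f, hf⟩, ⟨g, hg⟩⟩ := v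
  have hfg : (f, g) ≠ 0 := fun h =>
    hv (Prod.ext (Subtype.ext (congrArg Prod.fst h)) (Subtype.ext (congrArg Prod.snd h)))
  have hpos := poleOrder_kummer_norm_pos hm ha hb hab hfg
  have := finite_quotient_span_singleton hpos
  rw [Nat.card_eq_fintype_card, Fintype.card_subtype, ← Finset.card_map p]
  refine (card_zeros_le (Nat.pos_of_ne_zero hm) _ (ne_zero_of_poleOrder_pos hpos)
    fun P hP => ?_).trans ?_
  · obtain ⟨i, hi, rfl⟩ := Finset.mem_map.mp hP
    exact sub_eq_zero.mp (Finset.mem_filter.mp hi).2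
  · rw [finrank_quotient_span_singleton (ne_zero_of_poleOrder_pos hpos)]
    exact poleOrder_kummer_norm_le (mem_riemannRochSpace.mp hf) (mem_riemannRochSpace.mp hg)

end KummerPoint

end Codes

section PointCount

variable {F : Type*} [Field F] [Fintype F]

theorem splits_X_pow_card_sub_X : (X ^ Fintype.card F - X : F[X]).Splits := by
  rw [splits_iff_card_roots, FiniteField.roots_X_pow_card_sub_X,
    FiniteField.X_pow_card_sub_X_natDegree_eq F Fintype.one_lt_card]
  rfl

theorem card_filter_pow_eq [DecidableEq F] {n l : ℕ} (h : n * l = Fintype.card F - 1) {a : F}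
    (ha : a ^ l = 1) : (Finset.univ.filter fun z : F => z ^ n = a).card = n := by
  have hq : 1 < Fintype.card F := Fintype.one_lt_card
  have hn : 0 < n := Nat.pos_of_mul_pos_right (b := l) (by omega)
  have hdvd : X ^ n - C a ∣ (X ^ Fintype.card F - X : F[X]) := by
    have hX : (X ^ Fintype.card F - X : F[X]) = X * ((X ^ n) ^ l - C a ^ l) := by
      rw [← pow_mul, h, ← C_pow, ha, map_one, mul_sub, mul_one, ← pow_succ',
        Nat.sub_add_cancel hq.le]
    exact hX ▸ (sub_dvd_pow_sub_pow (X ^ n) (C a) l).mul_left X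
  have hne : (X ^ Fintype.card F - X : F[X]) ≠ 0 := FiniteField.X_pow_card_sub_X_ne_zero F hq
  have hnodup : (nthRoots n a).Nodup :=
    Multiset.nodup_of_le (roots.le_of_dvd hne hdvd)
      (FiniteField.roots_X_pow_card_sub_X F ▸ Finset.univ.nodup)
  have hroots : (Finset.univ.filter fun z : F => z ^ n = a) = (nthRoots n a).toFinset := by
    ext z
    simp [mem_nthRoots hn]
  rw [hroots, Multiset.toFinset_card_of_nodup hnodup, nthRoots,
    ← (splits_X_pow_card_sub_X.of_dvd hne hdvd).natDegree_eq_card_roots, natDegree_X_pow_sub_C]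

/-- For `q = p ^ k`, the element `s ^ (q + 1)` is the norm of `s` in the subfield with
`q` elements. -/
theorem pow_add_one_sub_one_pow_eq_one {p k : ℕ} [Fact p.Prime] [CharP F p]
    (hF : Fintype.card F = (p ^ k) ^ 2) {s : F} (h1 : s ^ (p ^ k + 1) ≠ 1) :
    (s ^ (p ^ k + 1) - 1) ^ (p ^ k - 1) = 1 := by
  have hp : p ≠ 0 := NeZero.ne p
  have hs : (s ^ (p ^ k + 1)) ^ (p ^ k) = s ^ (p ^ k + 1) := by
    rw [← pow_mul, add_one_mul, ← sq, pow_add, ← hF, FiniteField.pow_card, pow_succ']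
  have hd : (s ^ (p ^ k + 1) - 1) ^ (p ^ k) = s ^ (p ^ k + 1) - 1 := by
    rw [sub_pow_char_pow, hs, one_pow]
  exact (mul_eq_left₀ (sub_ne_zero.mpr h1)).mp ((mul_pow_sub_one (pow_ne_zero k hp) _).trans hd)

/-- A rational point of the affine curve `s ^ (3 * m) = v ^ 3 + 1` with `s ≠ 0`. For `q = 3 * m - 1`
the curve is a quotient of the Hermitian curve over the field with `q ^ 2` elements. -/
@[ext]
structure HermitianQuotientPoint (F : Type*) [Field F] (m : ℕ) where
  /-- The coordinate `v`. -/
  v : F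
  /-- The coordinate `s`. -/
  s : F
  s_ne_zero : s ≠ 0
  s_pow_eq : s ^ (3 * m) = v ^ 3 + 1

namespace HermitianQuotientPoint

variable {k m : ℕ}

theorem card_eq_sum [DecidableEq F] (m : ℕ) : Nat.card (HermitianQuotientPoint F m) =
    ∑ s ∈ Finset.univ.erase (0 : F),
      (Finset.univ.filter fun v : F => v ^ 3 = s ^ (3 * m) - 1).card := by
  rw [← Finset.card_sigma, ← Fintype.card_coe, ← Nat.card_eq_fintype_card]
  exact Nat.card_congr
    { toFun P := ⟨⟨P.s, P.v⟩, by simp [P.s_ne_zero, P.s_pow_eq]⟩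
      invFun P := by
        have hP := Finset.mem_sigma.mp P.2
        refine ⟨P.1.2, P.1.1, Finset.ne_of_mem_erase hP.1, ?_⟩
        rw [(Finset.mem_filter.mp hP.2).2, sub_add_cancel]
      left_inv _ := rfl
      right_inv _ := rfl }

theorem card_fiber [DecidableEq F] [CharP F 2] (hF : Fintype.card F = (2 ^ k) ^ 2)
    (hm : 3 * m = 2 ^ k + 1) (s : F) :
    (Finset.univ.filter fun v : F => v ^ 3 = s ^ (3 * m) - 1).card =
      if s ^ (3 * m) = 1 then 1 else 3 := by
  split_ifs with h1
  · simp [h1, Finset.filter_eq']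
  · refine card_filter_pow_eq (l := m * (2 ^ k - 1)) ?_ ?_
    · rw [← mul_assoc, hm, hF, ← Nat.sq_sub_sq, one_pow]
    · rw [hm] at h1 ⊢
      rw [mul_comm, pow_mul, pow_add_one_sub_one_pow_eq_one hF h1, one_pow]

theorem card_eq [CharP F 2] (hF : Fintype.card F = (2 ^ k) ^ 2) (hm : 3 * m = 2 ^ k + 1) :
    Nat.card (HermitianQuotientPoint F m) = 3 * m * (9 * m - 8) := by
  classical
  have hm0 : 0 < m := Nat.pos_of_ne_zero fun h => by simp [h] at hm
  have hcard : Fintype.card F - 1 = 3 * m * (2 ^ k - 1) := by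
    rw [hm, hF, ← Nat.sq_sub_sq, one_pow]
  have hone : ((Finset.univ.erase (0 : F)).filter fun s => s ^ (3 * m) = 1).card = 3 * m := by
    have h0 : (0 : F) ∉ Finset.univ.filter fun s => s ^ (3 * m) = 1 := by
      simp [hm]
    rw [Finset.filter_erase, Finset.erase_eq_of_notMem h0,
      card_filter_pow_eq hcard.symm (one_pow _)]
  have hsum := Finset.card_filter_add_card_filter_not (s := Finset.univ.erase (0 : F))
    fun s => s ^ (3 * m) = 1
  rw [hone, Finset.card_erase_of_mem (Finset.mem_univ 0), Finset.card_univ, hcard] at hsum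
  rw [card_eq_sum, Finset.sum_congr rfl fun s _ => card_fiber hF hm s, Finset.sum_ite,
    Finset.sum_const, Finset.sum_const, hone, smul_eq_mul, smul_eq_mul]
  obtain ⟨r, rfl⟩ : ∃ r, m = r + 1 := Nat.exists_eq_add_one.mpr hm0
  have hq : 2 ^ k = 3 * r + 2 := by linarith
  rw [hq, show 3 * r + 2 - 1 = 3 * r + 1 by omega] at hsum
  rw [show 9 * (r + 1) - 8 = 9 * r + 1 by omega]
  linarith

end HermitianQuotientPoint

end PointCount

section EvalPoint

open WeierstrassCurve Affine.CoordinateRing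

variable {F : Type*} [Field F] {W : Affine F} {x y : F}

/-- Evaluation of regular functions at a rational point of an affine Weierstrass curve. -/
noncomputable def evalPoint (h : W.Equation x y) : W.CoordinateRing →ₐ[F] F :=
  AdjoinRoot.liftAlgHom W.polynomial (aeval x) y <| by
    rw [← h, ← eval₂_evalRingHom]
    rfl

theorem evalPoint_algebraMap_X (h : W.Equation x y) :
    evalPoint h (algebraMap F[X] W.CoordinateRing X) = x := by
  simp [evalPoint, AdjoinRoot.algebraMap_eq]

theorem evalPoint_mk_X (h : W.Equation x y) : evalPoint h (mk W X) = y := by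
  exact AdjoinRoot.liftAlgHom_root _ _ _ _

end EvalPoint

section CoverPoint

open WeierstrassCurve Affine.CoordinateRing

variable {F ι : Type*} [Field F] [Finite ι] {W : Affine F} {m n : ℕ}

/-- A point of the cover `z ^ m = y / x` of an affine Weierstrass curve. -/
abbrev CoverPoint (W : Affine F) (m : ℕ) : Type _ :=
  KummerPoint F m (algebraMap F[X] W.CoordinateRing X) (mk W X)

theorem not_poleOrder_X_modEq_poleOrder_mk_X (hm : 2 ≤ m) :
    ¬ poleOrder (algebraMap F[X] W.CoordinateRing X) ≡ poleOrder (mk W X) [MOD m] := by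
  rw [poleOrder_algebraMap_X, poleOrder_mk_X, Nat.modEq_iff_dvd' (by norm_num), Nat.dvd_one]
  omega

namespace CoverPoint

theorem card_zeros_evalMap_le (p : ι ↪ CoverPoint W m) (hm : 2 ≤ m)
    (v : riemannRochSpace W n × riemannRochSpace W n) (hv : v ≠ 0) :
    Nat.card {i // KummerPoint.evalMap p (riemannRochSpace W n) v i = 0} ≤ m * n + 3 := by
  have h := KummerPoint.card_zeros_evalMap_le p (by omega)
    (poleOrder_algebraMap_X.trans_gt two_pos) (poleOrder_mk_X.trans_gt three_pos)
    (not_poleOrder_X_modEq_poleOrder_mk_X hm) n v hv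
  rwa [poleOrder_algebraMap_X, poleOrder_mk_X] at h

theorem finrank_range_evalMap (p : ι ↪ CoverPoint W m) (hm : 2 ≤ m) (hn : 1 ≤ n)
    (hd : m * n + 3 < Nat.card ι) :
    finrank F (LinearMap.range (KummerPoint.evalMap p (riemannRochSpace W n))) = 2 * n := by
  rw [LinearMap.finrank_range_of_inj (injective_of_card_zeros_lt fun v hv =>
    (card_zeros_evalMap_le p hm v hv).trans_lt hd), finrank_prod,
    finrank_riemannRochSpace hn, two_mul]

end CoverPoint

end CoverPoint

section EllipticCurve

open WeierstrassCurve Affine.CoordinateRing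

/-- The elliptic curve `y ^ 2 + y = x ^ 3 + 1`, which is supersingular in characteristic `2`. -/
def supersingularCurve (F : Type*) [Field F] : Affine F :=
  ⟨0, 0, 1, 0, 1⟩

namespace HermitianQuotientPoint

variable {F : Type*} [Field F] {m : ℕ}

theorem v_add_one_ne_zero (P : HermitianQuotientPoint F m) : P.v + 1 ≠ 0 := by
  intro h
  refine pow_ne_zero (3 * m) P.s_ne_zero (P.s_pow_eq.trans ?_)
  linear_combination (P.v ^ 2 - P.v + 1) * h

theorem equation_supersingularCurve [CharP F 2] (P : HermitianQuotientPoint F m) :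
    (supersingularCurve F).Equation (P.s ^ m / (P.v + 1)) (P.v + 1)⁻¹ := by
  have h2 : (2 : F) = 0 := CharTwo.two_eq_zero
  have hv := P.v_add_one_ne_zero
  have hs : (P.s ^ m) ^ 3 = P.v ^ 3 + 1 := by rw [← pow_mul, mul_comm, P.s_pow_eq]
  rw [Affine.equation_iff, div_pow, hs]
  simp only [supersingularCurve]
  field_simp
  linear_combination (-P.v ^ 3 - P.v ^ 2) * h2

/-- The birational map `x = s ^ m / (v + 1)`, `y = 1 / (v + 1)`, `z = 1 / s` to the Kummer cover. -/
noncomputable def toCoverPoint [CharP F 2] (P : HermitianQuotientPoint F m) :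
    CoverPoint (supersingularCurve F) m where
  base := evalPoint P.equation_supersingularCurve
  root := P.s⁻¹
  base_ne_zero := by
    rw [evalPoint_algebraMap_X]
    exact div_ne_zero (pow_ne_zero m P.s_ne_zero) P.v_add_one_ne_zero
  root_pow_mul := by
    rw [evalPoint_algebraMap_X, evalPoint_mk_X, inv_pow,
      mul_div_assoc', inv_mul_cancel₀ (pow_ne_zero m P.s_ne_zero), one_div]

theorem toCoverPoint_injective [CharP F 2] :
    Function.Injective (toCoverPoint (F := F) (m := m)) := by
  intro P Q h
  have hs : P.s = Q.s := inv_injective (congrArg KummerPoint.root h)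
  have hv : (P.v + 1)⁻¹ = (Q.v + 1)⁻¹ := by
    have := congrArg (fun R : CoverPoint (supersingularCurve F) m =>
      R.base (Affine.CoordinateRing.mk (supersingularCurve F) X)) h
    rwa [toCoverPoint, evalPoint_mk_X, toCoverPoint, evalPoint_mk_X] at this
  exact HermitianQuotientPoint.ext (add_left_injective 1 (inv_injective hv)) hs

variable (F m) in
/-- The birational map `toCoverPoint` as an embedding, for use in indexing the coordinates of a code
by its source. -/
noncomputable def coverEmbedding [CharP F 2] :
    HermitianQuotientPoint F m ↪ CoverPoint (supersingularCurve F) m :=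
  ⟨toCoverPoint, toCoverPoint_injective⟩

theorem base_toCoverPoint_eq [CharP F 2] {P Q : HermitianQuotientPoint F m} (hv : P.v = Q.v)
    (hs : P.s ^ m = Q.s ^ m) : P.toCoverPoint.base = Q.toCoverPoint.base := by
  simp only [toCoverPoint, hv, hs]

theorem exists_pair_base_toCoverPoint_eq [Fintype F] [CharP F 2] {l : ℕ} (hm : 3 ≤ m)
    (h : m * l = Fintype.card F - 1) (P : HermitianQuotientPoint F m) :
    ∃ Q R : HermitianQuotientPoint F m, Q ≠ P ∧ R ≠ P ∧ Q ≠ R ∧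
      Q.toCoverPoint.base = P.toCoverPoint.base ∧ R.toCoverPoint.base = P.toCoverPoint.base := by
  classical
  have hroots := card_filter_pow_eq h (a := P.s ^ m) (by
    rw [← pow_mul, h, FiniteField.pow_card_sub_one_eq_one _ P.s_ne_zero])
  have hP : P.s ∈ Finset.univ.filter fun s => s ^ m = P.s ^ m := by simp
  have hone : 1 < ((Finset.univ.filter fun s => s ^ m = P.s ^ m).erase P.s).card := by
    rw [Finset.card_erase_of_mem hP, hroots]
    omega
  obtain ⟨s, hs, r, hr, hsr⟩ := Finset.one_lt_card.mp hone
  simp only [Finset.mem_erase, Finset.mem_filter, Finset.mem_univ, true_and] at hs hr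
  let conj (t : F) (ht : t ^ m = P.s ^ m) : HermitianQuotientPoint F m :=
    ⟨P.v, t, fun h0 => pow_ne_zero m P.s_ne_zero (by rw [← ht, h0, zero_pow (by omega)]), by
      rw [mul_comm, pow_mul, ht, ← pow_mul, mul_comm, P.s_pow_eq]⟩
  exact ⟨conj s hs.2, conj r hr.2, fun h => hs.1 (congrArg HermitianQuotientPoint.s h),
    fun h => hr.1 (congrArg HermitianQuotientPoint.s h),
    fun h => hsr (congrArg HermitianQuotientPoint.s h),
    base_toCoverPoint_eq rfl hs.2, base_toCoverPoint_eq rfl hr.2⟩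

theorem hasLocality_range_evalMap [Fintype F] [CharP F 2] {ι : Type*}
    (e : ι ≃ HermitianQuotientPoint F m) {l : ℕ} (hm : 3 ≤ m) (h : m * l = Fintype.card F - 1)
    (L : Submodule F (supersingularCurve F).CoordinateRing) :
    HasLocality (LinearMap.range
      (KummerPoint.evalMap (e.toEmbedding.trans (coverEmbedding F m)) L)) 2 := by
  refine KummerPoint.hasLocality_range_evalMap _ L fun i => ?_
  obtain ⟨Q, R, hQ, hR, hQR, hQP, hRP⟩ := (e i).exists_pair_base_toCoverPoint_eq hm h
  have hbase (P : HermitianQuotientPoint F m) :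
      (e.toEmbedding.trans (coverEmbedding F m) (e.symm P)).base = P.toCoverPoint.base :=
    congrArg (fun P => P.toCoverPoint.base) (e.apply_symm_apply P)
  refine ⟨e.symm Q, e.symm R, ?_, ?_, e.symm.injective.ne hQR, ?_, ?_⟩
  · rwa [ne_eq, e.symm_apply_eq]
  · rwa [ne_eq, e.symm_apply_eq]
  · exact (hbase Q).trans hQP
  · exact (hbase R).trans hRP

end HermitianQuotientPoint

end EllipticCurve

theorem exists_LRC_F64_length171_general {F : Type*} [Field F] {k m t : ℕ}
    (hF : Nat.card F = (2 ^ k) ^ 2) (hm : 3 * m = 2 ^ k + 1) (ht : 1 ≤ t)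
    (hmt : m * t + 3 < 3 * m * (9 * m - 8)) :
    ∃ C : Submodule F (Fin (3 * m * (9 * m - 8)) → F), finrank F C = 2 * t ∧
      (∀ x ∈ C, x ≠ 0 → 3 * m * (9 * m - 8) - (m * t + 3) ≤ Nat.card {i // x i ≠ 0}) ∧
      HasLocality C 2 := by
  have : Finite F := Nat.finite_of_card_ne_zero (by rw [hF]; positivity)
  have := Fintype.ofFinite F
  rw [Nat.card_eq_fintype_card] at hF
  have : CharP F 2 := charP_of_card_eq_prime_pow (hF.trans (pow_mul 2 k 2).symm)
  have hcard := HermitianQuotientPoint.card_eq hF hm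
  have hm3 : 3 ≤ m := by
    have hm2 : m ≠ 2 := by
      rintro rfl
      rcases k with _ | k <;> simp only [pow_zero, pow_succ] at hm <;> omega
    by_contra! hlt
    interval_cases m <;> omega
  have : Finite (HermitianQuotientPoint F m) := Nat.finite_of_card_ne_zero (by omega)
  let e : Fin (3 * m * (9 * m - 8)) ≃ HermitianQuotientPoint F m :=
    (Finite.equivFinOfCardEq hcard).symm
  let p := e.toEmbedding.trans (HermitianQuotientPoint.coverEmbedding F m)
  have hl : m * (3 * (2 ^ k - 1)) = Fintype.card F - 1 := by
    rw [hF, ← mul_assoc, mul_comm m, hm, ← Nat.sq_sub_sq, one_pow]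
  refine ⟨LinearMap.range (KummerPoint.evalMap p (riemannRochSpace _ t)), ?_, fun x hx hx0 => ?_,
    HermitianQuotientPoint.hasLocality_range_evalMap e hm3 hl _⟩
  · exact CoverPoint.finrank_range_evalMap p (by omega) ht (by rwa [Nat.card_fin])
  · have h := card_sub_le_weight_of_card_zeros_le
      (CoverPoint.card_zeros_evalMap_le p (by omega)) hx hx0
    rwa [Nat.card_fin] at h

theorem exists_LRC_F64_length171 :
    ∀ t : ℕ, 1 ≤ t → t ≤ 55 →
      ∃ C : Submodule (GaloisField 2 6) (Fin 171 → GaloisField 2 6),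
        Module.finrank (GaloisField 2 6) C = 2 * t ∧
        (∀ x : Fin 171 → GaloisField 2 6, x ∈ C → x ≠ 0 →
          168 - 3 * t ≤ Nat.card {i : Fin 171 // x i ≠ 0}) ∧
        (∀ i : Fin 171, ∃ I : Finset (Fin 171), i ∉ I ∧ I.card ≤ 2 ∧
          ∀ x ∈ C, ∀ y ∈ C, (∀ j ∈ I, x j = y j) → x i = y i) := by
  intro t ht ht55
  obtain ⟨C, hdim, hdist, hloc⟩ := exists_LRC_F64_length171_general (k := 3) (m := 3)
    (GaloisField.card 2 6 (by norm_num)) (by norm_num) ht (by omega)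
  exact ⟨C, hdim, fun x hx hx0 => (by omega : 168 - 3 * t ≤ _).trans (hdist x hx hx0), hloc⟩
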